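/- arXiv:1510.08740 — 2 statements merged into one kernel-verified Lean document; each statement's English description precedes it below -/
import Mathlib

section
/- Let H be a real Hilbert space, Ψ : H → ℝ ∪ {+∞} proper, lower-semicontinuous and convex, and Φ : H → ℝ convex and continuously differentiable with L-Lipschitz continuous gradient. Suppose S = argmin(Ψ + Φ) is nonempty, and let (x_k) be generated by the accelerated forward-backward algorithm with parameter α > 3 and step size 0 < s < 1/L. Then the function values satisfy lim_{k→∞} k² ((Ψ + Φ)(x_k) − min(Ψ + Φ)) = 0; i.e. (Ψ + Φ)(x_k) − min(Ψ + Φ) = o(k^{-2}). -/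
open Filter RealInnerProductSpace

open scoped NNReal Topology

/-!
With `F = Ψ + Φ` and `κ = 1 / (2 s)`, a forward-backward step from `y` to `z` satisfies
`F z + κ ‖z - u‖ ^ 2 ≤ F u + κ ‖y - u‖ ^ 2` for every `u`; the rest of the argument only uses this.
Let `w` minimize `F`, let `θ k = F (x k) - F w` and `t k = (k + α - 2) / (α - 1)`, so that the
extrapolation coefficient at step `k` is `(t k - 1) / t (k + 1)`. Combining the inequalities for
`u = x k` and `u = w` makes the energy
`t k ^ 2 * θ k + κ ‖t k • x k - (t k - 1) • x (k - 1) - w‖ ^ 2` decrease by at least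
`(α - 3) / (α - 1) * t k * θ k`, hence `∑ t k * θ k < ∞`. The inequality for `u = x k` alone shows
that `W k = t k ^ 2 * θ k + κ (t k - 1) ^ 2 * ‖x k - x (k - 1)‖ ^ 2` increases by at most
`t (k + 1) * θ k`, so `W` converges, and also gives `∑ t k * ‖x k - x (k - 1)‖ ^ 2 < ∞`.
Therefore `∑ W k / t k < ∞` while `∑ 1 / t k = ∞`, which forces the limit of `W` to be `0`.
-/

section RealSequences

variable {E b e W w : ℕ → ℝ} {l : ℝ}

lemma summable_of_succ_add_le_add (hE : BddBelow (Set.range E)) (hb : ∀ n, 0 ≤ b n)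
    (he : Summable e) (h : ∀ n, E (n + 1) + b n ≤ E n + e n) : Summable b := by
  obtain ⟨m, hm⟩ := hE
  obtain ⟨M, hM⟩ := he.hasSum.tendsto_sum_nat.bddAbove_range
  refine summable_of_sum_range_le (c := M + (E 0 - m)) hb fun n => ?_
  calc ∑ i ∈ Finset.range n, b i
      ≤ ∑ i ∈ Finset.range n, (e i + (E i - E (i + 1))) :=
        Finset.sum_le_sum fun i _ => by linarith [h i]
    _ = ∑ i ∈ Finset.range n, e i + (E 0 - E n) := by
        rw [Finset.sum_add_distrib, Finset.sum_range_sub']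
    _ ≤ M + (E 0 - m) := by
        gcongr
        exacts [hM ⟨n, rfl⟩, hm ⟨n, rfl⟩]

lemma exists_tendsto_of_succ_le_add (hW : BddBelow (Set.range W)) (he : Summable e)
    (h : ∀ n, W (n + 1) ≤ W n + e n) : ∃ l, Tendsto W atTop (𝓝 l) := by
  have hanti : Antitone fun n => W n - ∑ i ∈ Finset.range n, e i :=
    antitone_nat_of_succ_le fun n => by
      rw [Finset.sum_range_succ]
      linarith [h n]
  obtain ⟨m, hm⟩ := hW
  obtain ⟨M, hM⟩ := he.hasSum.tendsto_sum_nat.bddAbove_range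
  have hbdd : BddBelow (Set.range fun n => W n - ∑ i ∈ Finset.range n, e i) := by
    refine ⟨m - M, ?_⟩
    rintro _ ⟨n, rfl⟩
    exact sub_le_sub (hm ⟨n, rfl⟩) (hM ⟨n, rfl⟩)
  exact ⟨_, by simpa using (tendsto_atTop_ciInf hanti hbdd).add he.hasSum.tendsto_sum_nat⟩

lemma eq_zero_of_tendsto_of_summable_mul (hw : ¬ Summable w) (hW : Tendsto W atTop (𝓝 l))
    (h : Summable fun n => W n * w n) : l = 0 := by
  by_contra hl
  have hone : (fun _ => l) =O[atTop] W :=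
    ((Asymptotics.isEquivalent_const_iff_tendsto hl).2 hW).isBigO_symm
  have hsum : Summable fun n => l * w n :=
    summable_of_isBigO_nat h (hone.mul (Asymptotics.isBigO_refl w atTop))
  exact hw ((summable_mul_left_iff hl).1 hsum)

end RealSequences

/-- Chambolle–Dossal type condition on the momentum parameters `t` of an accelerated method, with
extrapolation coefficients `(t n - 1) / t (n + 1)`. Nesterov's choice is the borderline case
`c = 0`, which is excluded. -/
structure IsMomentumSequence (c : ℝ) (t : ℕ → ℝ) : Prop where
  pos : 0 < c
  one_le : ∀ n, 1 ≤ t n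
  sq_sub_le : ∀ n, t (n + 1) ^ 2 - t (n + 1) ≤ t n ^ 2 - c * t n

namespace IsMomentumSequence

variable {c : ℝ} {t : ℕ → ℝ}

lemma sq_succ_le (ht : IsMomentumSequence c t) (n : ℕ) : t (n + 1) ^ 2 ≤ t n ^ 2 + t (n + 1) := by
  linarith [ht.sq_sub_le n, mul_nonneg ht.pos.le (zero_le_one.trans (ht.one_le n))]

lemma succ_le_add_one (ht : IsMomentumSequence c t) (n : ℕ) : t (n + 1) ≤ t n + 1 := by
  nlinarith [ht.sq_succ_le n, ht.one_le n, ht.one_le (n + 1)]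

lemma le_mul_add_one (ht : IsMomentumSequence c t) (n : ℕ) : t n ≤ t 0 * (n + 1) := by
  induction n with
  | zero => simp
  | succ n ih =>
    push_cast
    linarith [ht.succ_le_add_one n, ht.one_le 0]

lemma not_summable_inv (ht : IsMomentumSequence c t) : ¬ Summable fun n => (t n)⁻¹ := by
  intro h
  have : 0 < t 0 := one_pos.trans_le (ht.one_le 0)
  have hharm : Summable fun n : ℕ => 1 / ((n + 1 : ℕ) : ℝ) := by
    refine (h.mul_left (t 0)).of_nonneg_of_le (fun n => by positivity) fun n => ?_
    have hn : 0 < t n := one_pos.trans_le (ht.one_le n)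
    rw [← div_eq_mul_inv, div_le_div_iff₀ (by positivity) hn, one_mul]
    exact_mod_cast ht.le_mul_add_one n
  exact Real.not_summable_one_div_natCast
    ((summable_nat_add_iff (f := fun n : ℕ => 1 / (n : ℝ)) 1).1 hharm)

end IsMomentumSequence

lemma isMomentumSequence_add_div {α : ℝ} (hα : 3 < α) :
    IsMomentumSequence ((α - 3) / (α - 1)) fun n => (n + α) / (α - 1) where
  pos := div_pos (by linarith) (by linarith)
  one_le n := by
    rw [le_div_iff₀ (by linarith)]
    linarith [n.cast_nonneg (α := ℝ)]
  sq_sub_le n := by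
    have hα₁ : α - 1 ≠ 0 := by linarith
    have hgap : ((n : ℝ) + α) ^ 2 / (α - 1) ^ 2 - (α - 3) * (n + α) / (α - 1) ^ 2
        - ((n + 1 + α) ^ 2 / (α - 1) ^ 2 - (n + 1 + α) / (α - 1)) = (α - 2) / (α - 1) ^ 2 := by
      field_simp
      ring
    have hnonneg : 0 ≤ (α - 2) / (α - 1) ^ 2 := div_nonneg (by linarith) (sq_nonneg _)
    rw [div_pow, div_pow, div_mul_div_comm, ← sq (α - 1)]
    push_cast
    linarith

section AcceleratedDescent

variable {H : Type*} [NormedAddCommGroup H] [InnerProductSpace ℝ H]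

lemma norm_smul_sub_smul_sub_sq (t : ℝ) (p q w : H) :
    ‖t • p - (t - 1) • q - w‖ ^ 2
      = t * (t - 1) * ‖p - q‖ ^ 2 + t * ‖p - w‖ ^ 2 - (t - 1) * ‖q - w‖ ^ 2 := by
  have hlhs : t • p - (t - 1) • q - w = t • (p - w) - (t - 1) • (q - w) := by module
  rw [hlhs, ← sub_sub_sub_cancel_right p q w, norm_sub_sq_real, norm_sub_sq_real, norm_smul,
    norm_smul, real_inner_smul_left, real_inner_smul_right, mul_pow, mul_pow]
  simp only [Real.norm_eq_abs, sq_abs]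
  ring

/-- `x` is generated by extrapolating with momentum parameters `t` and then performing a step that
decreases `F` on `D` as a forward-backward step of size `1 / (2 * κ)` does. The membership and the
decrease start at `x 1` and `x 2`, because the initial point `x 0` need not lie in the domain. -/
structure IsAcceleratedDescent (F : H → ℝ) (D : Set H) (κ : ℝ) (t : ℕ → ℝ) (x y : ℕ → H) :
    Prop where
  mem : ∀ n, x (n + 1) ∈ D
  extrapolation : ∀ n, y n = x (n + 1) + ((t n - 1) / t (n + 1)) • (x (n + 1) - x n)
  descent : ∀ n, ∀ u ∈ D, F (x (n + 2)) + κ * ‖x (n + 2) - u‖ ^ 2 ≤ F u + κ * ‖y n - u‖ ^ 2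

namespace IsAcceleratedDescent

variable {F : H → ℝ} {D : Set H} {κ c : ℝ} {t : ℕ → ℝ} {x y : ℕ → H} {w : H}

/-- Nesterov's Lyapunov function relative to the reference point `w`. -/
def anchoredEnergy (F : H → ℝ) (κ : ℝ) (t : ℕ → ℝ) (x : ℕ → H) (w : H) (n : ℕ) : ℝ :=
  t n ^ 2 * (F (x (n + 1)) - F w) + κ * ‖t n • x (n + 1) - (t n - 1) • x n - w‖ ^ 2

/-- The rescaled sum of the potential energy `F (x (n + 1)) - F w` and the kinetic energy of the
last displacement. -/
def mechanicalEnergy (F : H → ℝ) (κ : ℝ) (t : ℕ → ℝ) (x : ℕ → H) (w : H) (n : ℕ) : ℝ :=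
  t n ^ 2 * (F (x (n + 1)) - F w) + κ * (t n - 1) ^ 2 * ‖x (n + 1) - x n‖ ^ 2

lemma gap_nonneg (h : IsAcceleratedDescent F D κ t x y) (hmin : IsMinOn F D w) (n : ℕ) :
    0 ≤ F (x (n + 1)) - F w :=
  sub_nonneg.2 (hmin (h.mem n))

lemma anchor_extrapolation (h : IsAcceleratedDescent F D κ t x y) {n : ℕ} (ht : t (n + 1) ≠ 0) :
    t (n + 1) • y n - (t (n + 1) - 1) • x (n + 1) = t n • x (n + 1) - (t n - 1) • x n := by
  rw [h.extrapolation n, smul_add, smul_smul, mul_div_cancel₀ _ ht]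
  module

lemma anchoredEnergy_succ_add_le (h : IsAcceleratedDescent F D κ t x y)
    (ht : IsMomentumSequence c t) (hw : w ∈ D) (hmin : IsMinOn F D w) (n : ℕ) :
    anchoredEnergy F κ t x w (n + 1) + c * (t n * (F (x (n + 1)) - F w))
      ≤ anchoredEnergy F κ t x w n := by
  have hτ := ht.one_le (n + 1)
  have hanchor := h.anchor_extrapolation (n := n) (by positivity)
  have hprev := mul_le_mul_of_nonneg_left (h.descent n _ (h.mem n))
    (mul_nonneg (zero_le_one.trans hτ) (sub_nonneg.2 hτ))
  have href := mul_le_mul_of_nonneg_left (h.descent n w hw) (zero_le_one.trans hτ)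
  have hmom := mul_le_mul_of_nonneg_right (ht.sq_sub_le n) (h.gap_nonneg hmin n)
  unfold anchoredEnergy
  rw [← hanchor, norm_smul_sub_smul_sub_sq, norm_smul_sub_smul_sub_sq]
  linarith

lemma mechanicalEnergy_succ_add_le (h : IsAcceleratedDescent F D κ t x y) (hκ : 0 ≤ κ)
    (ht : IsMomentumSequence c t) (hmin : IsMinOn F D w) (n : ℕ) :
    mechanicalEnergy F κ t x w (n + 1) + κ * (t (n + 1) * ‖x (n + 2) - x (n + 1)‖ ^ 2)
      ≤ mechanicalEnergy F κ t x w n + t (n + 1) * (F (x (n + 1)) - F w) := by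
  have hτ := ht.one_le (n + 1)
  have hkin : κ * (t (n + 1) ^ 2 * ‖y n - x (n + 1)‖ ^ 2)
      = κ * ((t n - 1) ^ 2 * ‖x (n + 1) - x n‖ ^ 2) := by
    rw [h.extrapolation n, add_sub_cancel_left, norm_smul, mul_pow, Real.norm_eq_abs, sq_abs,
      ← mul_assoc (_ ^ 2), ← mul_pow, mul_div_cancel₀ _ (by positivity)]
  have hprev := mul_le_mul_of_nonneg_left (h.descent n _ (h.mem n)) (sq_nonneg (t (n + 1)))
  have hmom := mul_le_mul_of_nonneg_right (ht.sq_succ_le n) (h.gap_nonneg hmin n)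
  have hslack : 0 ≤ κ * ((t (n + 1) - 1) * ‖x (n + 2) - x (n + 1)‖ ^ 2) :=
    mul_nonneg hκ (mul_nonneg (sub_nonneg.2 hτ) (sq_nonneg _))
  unfold mechanicalEnergy
  linarith

lemma summable_mul_gap (h : IsAcceleratedDescent F D κ t x y) (hκ : 0 ≤ κ)
    (ht : IsMomentumSequence c t) (hw : w ∈ D) (hmin : IsMinOn F D w) :
    Summable fun n => t n * (F (x (n + 1)) - F w) := by
  have ht₀ n : 0 ≤ t n := zero_le_one.trans (ht.one_le n)
  have hgap := h.gap_nonneg hmin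
  refine (summable_mul_left_iff ht.pos.ne').1 <| summable_of_succ_add_le_add
    ⟨0, ?_⟩ (fun n => mul_nonneg ht.pos.le (mul_nonneg (ht₀ n) (hgap n))) summable_zero
    fun n => (h.anchoredEnergy_succ_add_le ht hw hmin n).trans_eq (add_zero _).symm
  rintro _ ⟨n, rfl⟩
  have := hgap n
  unfold anchoredEnergy
  positivity

lemma mechanicalEnergy_nonneg (h : IsAcceleratedDescent F D κ t x y) (hκ : 0 ≤ κ)
    (hmin : IsMinOn F D w) (n : ℕ) : 0 ≤ mechanicalEnergy F κ t x w n := by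
  have := h.gap_nonneg hmin n
  unfold mechanicalEnergy
  positivity

lemma summable_succ_mul_gap (h : IsAcceleratedDescent F D κ t x y) (hκ : 0 ≤ κ)
    (ht : IsMomentumSequence c t) (hw : w ∈ D) (hmin : IsMinOn F D w) :
    Summable fun n => t (n + 1) * (F (x (n + 1)) - F w) := by
  refine ((h.summable_mul_gap hκ ht hw hmin).mul_left 2).of_nonneg_of_le
    (fun n => mul_nonneg (zero_le_one.trans (ht.one_le _)) (h.gap_nonneg hmin n)) fun n => ?_
  rw [← mul_assoc]
  have := h.gap_nonneg hmin n
  gcongr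
  linarith [ht.succ_le_add_one n, ht.one_le n]

lemma summable_mul_kinetic (h : IsAcceleratedDescent F D κ t x y) (hκ : 0 ≤ κ)
    (ht : IsMomentumSequence c t) (hw : w ∈ D) (hmin : IsMinOn F D w) :
    Summable fun n => κ * (t n * ‖x (n + 1) - x n‖ ^ 2) := by
  refine (summable_nat_add_iff 1).1 <| summable_of_succ_add_le_add
    ⟨0, Set.forall_mem_range.2 (h.mechanicalEnergy_nonneg hκ hmin)⟩ (fun n => ?_)
    (h.summable_succ_mul_gap hκ ht hw hmin) (h.mechanicalEnergy_succ_add_le hκ ht hmin)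
  have := ht.one_le (n + 1)
  positivity

lemma summable_mechanicalEnergy_mul_inv (h : IsAcceleratedDescent F D κ t x y) (hκ : 0 ≤ κ)
    (ht : IsMomentumSequence c t) (hw : w ∈ D) (hmin : IsMinOn F D w) :
    Summable fun n => mechanicalEnergy F κ t x w n * (t n)⁻¹ := by
  have ht₀ n : 0 < t n := one_pos.trans_le (ht.one_le n)
  refine ((h.summable_mul_gap hκ ht hw hmin).add
    (h.summable_mul_kinetic hκ ht hw hmin)).of_nonneg_of_le
    (fun n => mul_nonneg (h.mechanicalEnergy_nonneg hκ hmin n) (inv_nonneg.2 (ht₀ n).le))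
    fun n => ?_
  have hsq : (t n - 1) ^ 2 ≤ t n ^ 2 :=
    pow_le_pow_left₀ (sub_nonneg.2 (ht.one_le n)) (sub_le_self _ zero_le_one) 2
  rw [← div_eq_mul_inv, div_le_iff₀ (ht₀ n)]
  calc mechanicalEnergy F κ t x w n
      ≤ t n ^ 2 * (F (x (n + 1)) - F w) + κ * t n ^ 2 * ‖x (n + 1) - x n‖ ^ 2 := by
        unfold mechanicalEnergy
        gcongr
    _ = (t n * (F (x (n + 1)) - F w) + κ * (t n * ‖x (n + 1) - x n‖ ^ 2)) * t n := by ring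

lemma tendsto_mechanicalEnergy (h : IsAcceleratedDescent F D κ t x y) (hκ : 0 ≤ κ)
    (ht : IsMomentumSequence c t) (hw : w ∈ D) (hmin : IsMinOn F D w) :
    Tendsto (mechanicalEnergy F κ t x w) atTop (𝓝 0) := by
  have hdecr n : mechanicalEnergy F κ t x w (n + 1)
      ≤ mechanicalEnergy F κ t x w n + t (n + 1) * (F (x (n + 1)) - F w) := by
    have : 0 ≤ κ * (t (n + 1) * ‖x (n + 2) - x (n + 1)‖ ^ 2) := by
      have := ht.one_le (n + 1)
      positivity
    linarith [h.mechanicalEnergy_succ_add_le hκ ht hmin n]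
  obtain ⟨l, hl⟩ := exists_tendsto_of_succ_le_add
    ⟨0, Set.forall_mem_range.2 (h.mechanicalEnergy_nonneg hκ hmin)⟩
    (h.summable_succ_mul_gap hκ ht hw hmin) hdecr
  rwa [eq_zero_of_tendsto_of_summable_mul ht.not_summable_inv hl
    (h.summable_mechanicalEnergy_mul_inv hκ ht hw hmin)] at hl

theorem tendsto_sq_mul_gap (h : IsAcceleratedDescent F D κ t x y) (hκ : 0 ≤ κ)
    (ht : IsMomentumSequence c t) (hw : w ∈ D) (hmin : IsMinOn F D w) :
    Tendsto (fun n => t n ^ 2 * (F (x (n + 1)) - F w)) atTop (𝓝 0) := by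
  refine squeeze_zero (fun n => mul_nonneg (sq_nonneg _) (h.gap_nonneg hmin n)) (fun n => ?_)
    (h.tendsto_mechanicalEnergy hκ ht hw hmin)
  unfold mechanicalEnergy
  exact le_add_of_nonneg_right (by positivity)

end IsAcceleratedDescent

end AcceleratedDescent

section NormedSpace

variable {E : Type*} [NormedAddCommGroup E] [NormedSpace ℝ E]

lemma add_fderiv_le_of_convexOn {S : Set E} {f : E → ℝ} {f' : E →L[ℝ] ℝ} {p q : E}
    (hf : ConvexOn ℝ S f) (hf' : HasFDerivAt f f' p) (hp : p ∈ S) (hq : q ∈ S) :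
    f p + f' (q - p) ≤ f q := by
  have hderiv : HasDerivAt (f ∘ AffineMap.lineMap (k := ℝ) p q) (f' (q - p)) 0 :=
    HasFDerivAt.comp_hasDerivAt 0 (by simpa using hf') AffineMap.hasDerivAt_lineMap
  have hslope := (hf.comp_affineMap (AffineMap.lineMap (k := ℝ) p q)).le_slope_of_hasDerivAt
    (x := 0) (y := 1) (by simpa using hp) (by simpa using hq) zero_lt_one hderiv
  rw [slope_def_field] at hslope
  simp only [Function.comp_apply, AffineMap.lineMap_apply_one, AffineMap.lineMap_apply_zero,
    sub_zero, div_one] at hslope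
  linarith

lemma le_add_fderiv_add_of_lipschitzWith {f : E → ℝ} {f' : E → E →L[ℝ] ℝ} {K : ℝ≥0}
    (hf : ∀ u, HasFDerivAt f (f' u) u) (hf' : LipschitzWith K f') (p q : E) :
    f q ≤ f p + f' p (q - p) + K / 2 * ‖q - p‖ ^ 2 := by
  set line : ℝ →ᵃ[ℝ] E := AffineMap.lineMap p q with hline
  have hleft (r : ℝ) : HasDerivAt (f ∘ line) (f' (line r) (q - p)) r :=
    (hf (line r)).comp_hasDerivAt r AffineMap.hasDerivAt_lineMap
  have hright (r : ℝ) : HasDerivAt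
      (fun r => f p + r * f' p (q - p) + K / 2 * ‖q - p‖ ^ 2 * r ^ 2)
      (f' p (q - p) + K * ‖q - p‖ ^ 2 * r) r := by
    refine ((((hasDerivAt_id r).mul_const _).const_add (f p)).add
      ((hasDerivAt_pow 2 r).const_mul _)).congr_deriv ?_
    simp only [Nat.cast_ofNat, Nat.add_one_sub_one, pow_one]
    ring
  have hbound (r : ℝ) (hr : 0 ≤ r) :
      f' (line r) (q - p) ≤ f' p (q - p) + K * ‖q - p‖ ^ 2 * r := by
    rw [← sub_le_iff_le_add', ← sub_apply]
    calc (f' (line r) - f' p) (q - p)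
        ≤ ‖f' (line r) - f' p‖ * ‖q - p‖ :=
          (le_abs_self _).trans ((f' (line r) - f' p).le_opNorm _)
      _ ≤ K * ‖line r - p‖ * ‖q - p‖ := by
          gcongr
          exact hf'.norm_sub_le _ _
      _ = K * ‖q - p‖ ^ 2 * r := by
          rw [hline, AffineMap.lineMap_apply, vsub_eq_sub, vadd_eq_add, add_sub_cancel_right,
            norm_smul, Real.norm_of_nonneg hr]
          ring
  have hle := image_le_of_deriv_right_le_deriv_boundary
    (fun r _ => (hleft r).continuousAt.continuousWithinAt)
    (fun r _ => (hleft r).hasDerivWithinAt) (by simp [hline])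
    (fun r _ => (hright r).continuousAt.continuousWithinAt)
    (fun r _ => (hright r).hasDerivWithinAt) (fun r hr => hbound r hr.1)
    (Set.right_mem_Icc.2 (zero_le_one (α := ℝ)))
  simpa [hline] using hle

lemma add_modulus_le_of_isMinOn {S : Set E} {f : E → ℝ} {φ : ℝ → ℝ} {z u : E}
    (hf : UniformConvexOn S φ f) (hmin : IsMinOn f S z) (hz : z ∈ S) (hu : u ∈ S) :
    f z + φ ‖z - u‖ ≤ f u := by
  have hsegment : ∀ r ∈ Set.Ioo (0 : ℝ) 1, (1 - r) * φ ‖z - u‖ ≤ f u - f z := by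
    rintro r ⟨hr₀, hr₁⟩
    have hle := (hmin (hf.1 hz hu (sub_nonneg.2 hr₁.le) hr₀.le (sub_add_cancel 1 r))).trans
      (hf.2 hz hu (sub_nonneg.2 hr₁.le) hr₀.le (sub_add_cancel 1 r))
    simp only [smul_eq_mul] at hle
    refine le_of_mul_le_mul_left ?_ hr₀
    linarith
  have hlim : Tendsto (fun r : ℝ => (1 - r) * φ ‖z - u‖) (𝓝[>] 0) (𝓝 (φ ‖z - u‖)) :=
    (Continuous.tendsto' (by fun_prop) 0 _ (by simp)).mono_left nhdsWithin_le_nhds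
  have := le_of_tendsto hlim (eventually_of_mem (Ioo_mem_nhdsGT one_pos) hsegment)
  linarith

end NormedSpace

section ForwardBackward

variable {H : Type*} [NormedAddCommGroup H] [InnerProductSpace ℝ H]

lemma strongConvexOn_add_norm_sub_sq {D : Set H} {ψ : H → ℝ} (hψ : ConvexOn ℝ D ψ) (m : ℝ)
    (v : H) : StrongConvexOn D m fun u => ψ u + m / 2 * ‖u - v‖ ^ 2 := by
  have haffine : ConvexOn ℝ D fun u => ((-m) • innerSL ℝ v) u + m / 2 * ‖v‖ ^ 2 :=
    (((-m) • innerSL ℝ v).toLinearMap.convexOn hψ.1).add_const _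
  refine strongConvexOn_iff_convex.2 ((hψ.add haffine).congr fun u _ => ?_)
  simp only [Pi.add_apply, norm_sub_sq_real, real_inner_comm v u, _root_.smul_apply,
    innerSL_apply_apply, smul_eq_mul]
  ring

lemma prox_three_point {D : Set H} {ψ : H → ℝ} {m : ℝ} {v z u : H} (hψ : ConvexOn ℝ D ψ)
    (hz : z ∈ D) (hmin : IsMinOn (fun u => ψ u + m / 2 * ‖u - v‖ ^ 2) D z) (hu : u ∈ D) :
    ψ z + m / 2 * ‖z - v‖ ^ 2 + m / 2 * ‖z - u‖ ^ 2 ≤ ψ u + m / 2 * ‖u - v‖ ^ 2 :=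
  add_modulus_le_of_isMinOn (strongConvexOn_add_norm_sub_sq hψ m v) hmin hz hu

lemma forwardBackward_descent {D : Set H} {ψ Φ : H → ℝ} {g : H → H} {K : ℝ≥0} {s : ℝ} {y z u : H}
    (hψ : ConvexOn ℝ D ψ) (hΦ : ConvexOn ℝ Set.univ Φ)
    (hg : ∀ u, HasFDerivAt Φ (innerSL ℝ (g u)) u) (hlip : LipschitzWith K g)
    (hs : 0 < s) (hsK : s * K ≤ 1) (hz : z ∈ D)
    (hmin : IsMinOn (fun u => ψ u + 1 / (2 * s) * ‖u - (y - s • g y)‖ ^ 2) D z) (hu : u ∈ D) :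
    ψ z + Φ z + 1 / (2 * s) * ‖z - u‖ ^ 2 ≤ ψ u + Φ u + 1 / (2 * s) * ‖y - u‖ ^ 2 := by
  have hlip' : LipschitzWith K fun u => innerSL ℝ (g u) :=
    LipschitzWith.of_dist_le_mul fun p q => by
      rw [dist_eq_norm, ← map_sub, innerSL_apply_norm, ← dist_eq_norm]
      exact hlip.dist_le_mul p q
  have hupper := le_add_fderiv_add_of_lipschitzWith hg hlip' y z
  have hlower := add_fderiv_le_of_convexOn hΦ (hg y) (Set.mem_univ y) (Set.mem_univ u)
  have hκ : s⁻¹ / 2 = 1 / (2 * s) := by field_simp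
  have hprox := prox_three_point (m := s⁻¹) hψ hz (by rwa [hκ]) hu
  have hexpand (p : H) : 1 / (2 * s) * ‖p - (y - s • g y)‖ ^ 2
      = 1 / (2 * s) * ‖y - p‖ ^ 2 + ⟪g y, p - y⟫ + s / 2 * ‖g y‖ ^ 2 := by
    rw [← sub_add, norm_add_sq_real, inner_smul_right, real_inner_comm, norm_smul, mul_pow,
      Real.norm_eq_abs, sq_abs, norm_sub_rev p y]
    field_simp
  have hstep : K / 2 * ‖z - y‖ ^ 2 ≤ 1 / (2 * s) * ‖y - z‖ ^ 2 := by
    rw [norm_sub_rev z y]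
    refine mul_le_mul_of_nonneg_right ?_ (sq_nonneg _)
    rw [div_le_div_iff₀ two_pos (by positivity)]
    linarith
  simp only [hκ, hexpand] at hprox
  simp only [innerSL_apply_apply] at hupper hlower
  linarith

section Iteration

variable {D : Set H} {ψ Φ : H → ℝ} {g : H → H} {K : ℝ≥0} {s α : ℝ} {x y : ℕ → H} {w : H}

lemma isAcceleratedDescent_of_forwardBackward
    (hψ : ConvexOn ℝ D ψ) (hΦ : ConvexOn ℝ Set.univ Φ)
    (hg : ∀ u, HasFDerivAt Φ (innerSL ℝ (g u)) u) (hlip : LipschitzWith K g)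
    (hα : α ≠ 1) (hs : 0 < s) (hsK : s * K ≤ 1)
    (hy : ∀ k : ℕ, 1 ≤ k →
      y k = x k + (((k : ℝ) - 1) / ((k : ℝ) + α - 1)) • (x k - x (k - 1)))
    (hmem : ∀ k : ℕ, 1 ≤ k → x (k + 1) ∈ D)
    (hmin : ∀ k : ℕ, 1 ≤ k →
      IsMinOn (fun u => ψ u + 1 / (2 * s) * ‖u - (y k - s • g (y k))‖ ^ 2) D (x (k + 1))) :
    IsAcceleratedDescent (fun u => ψ u + Φ u) D (1 / (2 * s)) (fun n => (n + α) / (α - 1))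
      (fun n => x (n + 1)) (fun n => y (n + 2)) where
  mem n := hmem (n + 1) le_add_self
  extrapolation n := by
    have hα₁ : α - 1 ≠ 0 := sub_ne_zero.2 hα
    have hcoeff : ((n + α) / (α - 1) - 1) / (((n + 1 : ℕ) + α) / (α - 1))
        = (((n + 2 : ℕ) : ℝ) - 1) / ((n + 2 : ℕ) + α - 1) := by
      rw [div_sub_one hα₁, div_div_div_cancel_right₀ hα₁]
      push_cast
      congr 1 <;> ring
    rw [hcoeff]
    exact hy (n + 2) (Nat.le_add_left 1 (n + 1))
  descent n _ hu :=
    forwardBackward_descent hψ hΦ hg hlip hs hsK (hmem (n + 2) (Nat.le_add_left 1 (n + 1)))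
      (hmin (n + 2) (Nat.le_add_left 1 (n + 1))) hu

lemma tendsto_sq_mul_gap_of_forwardBackward
    (hψ : ConvexOn ℝ D ψ) (hΦ : ConvexOn ℝ Set.univ Φ)
    (hg : ∀ u, HasFDerivAt Φ (innerSL ℝ (g u)) u) (hlip : LipschitzWith K g)
    (hα : 3 < α) (hs : 0 < s) (hsK : s * K ≤ 1)
    (hy : ∀ k : ℕ, 1 ≤ k →
      y k = x k + (((k : ℝ) - 1) / ((k : ℝ) + α - 1)) • (x k - x (k - 1)))
    (hmem : ∀ k : ℕ, 1 ≤ k → x (k + 1) ∈ D)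
    (hmin : ∀ k : ℕ, 1 ≤ k →
      IsMinOn (fun u => ψ u + 1 / (2 * s) * ‖u - (y k - s • g (y k))‖ ^ 2) D (x (k + 1)))
    (hw : w ∈ D) (hwmin : IsMinOn (fun u => ψ u + Φ u) D w) :
    Tendsto (fun k : ℕ => (k : ℝ) ^ 2 * (ψ (x k) + Φ (x k) - (ψ w + Φ w))) atTop (𝓝 0) := by
  have hdescent := isAcceleratedDescent_of_forwardBackward hψ hΦ hg hlip (by linarith : 1 < α).ne'
    hs hsK hy hmem hmin
  have hlim := (hdescent.tendsto_sq_mul_gap (by positivity) (isMomentumSequence_add_div hα) hw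
    hwmin).const_mul ((α - 1) ^ 2)
  rw [mul_zero] at hlim
  refine (tendsto_add_atTop_iff_nat 2).1 (squeeze_zero (fun n => ?_) (fun n => ?_) hlim)
  · exact mul_nonneg (sq_nonneg _) (hdescent.gap_nonneg hwmin n)
  · have hα₁ : α - 1 ≠ 0 := by linarith
    rw [← mul_assoc, ← mul_pow, mul_div_cancel₀ _ hα₁]
    refine mul_le_mul_of_nonneg_right ?_ (hdescent.gap_nonneg hwmin n)
    push_cast
    gcongr
    linarith

end Iteration

end ForwardBackward

section ExtendedReal

variable {E : Type*}

/-- The effective domain of an extended real function. A function to `ℝ ∪ {+∞}` is encoded as a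
function `Ψ` to `EReal` that avoids `⊥`, and is handled through the real function
`u ↦ (Ψ u).toReal` on its effective domain. -/
def effectiveDomain (Ψ : E → EReal) : Set E := {u | Ψ u ≠ ⊤}

variable {Ψ : E → EReal} {φ : E → ℝ} {z : E}

lemma coe_toReal_of_mem_effectiveDomain (hbot : ∀ u, Ψ u ≠ ⊥) (hz : z ∈ effectiveDomain Ψ) :
    ((Ψ z).toReal : EReal) = Ψ z :=
  EReal.coe_toReal hz (hbot z)

lemma mem_effectiveDomain_of_le (hproper : ∃ u, Ψ u ≠ ⊤)
    (hz : ∀ u, Ψ z + (φ z : EReal) ≤ Ψ u + (φ u : EReal)) : z ∈ effectiveDomain Ψ := by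
  obtain ⟨u, hu⟩ := hproper
  intro htop
  have hle := hz u
  rw [htop, EReal.top_add_coe, top_le_iff] at hle
  exact EReal.add_ne_top hu (EReal.coe_ne_top _) hle

lemma isMinOn_toReal_add (hbot : ∀ u, Ψ u ≠ ⊥) (hproper : ∃ u, Ψ u ≠ ⊤)
    (hz : ∀ u, Ψ z + (φ z : EReal) ≤ Ψ u + (φ u : EReal)) :
    IsMinOn (fun u => (Ψ u).toReal + φ u) (effectiveDomain Ψ) z := by
  intro u hu
  have hle := hz u
  rw [← coe_toReal_of_mem_effectiveDomain hbot (mem_effectiveDomain_of_le hproper hz),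
    ← coe_toReal_of_mem_effectiveDomain hbot hu] at hle
  exact_mod_cast hle

lemma convexOn_toReal [AddCommGroup E] [Module ℝ E] (hbot : ∀ u, Ψ u ≠ ⊥)
    (hconv : ∀ u v : E, ∀ a b : ℝ, 0 ≤ a → 0 ≤ b → a + b = 1 →
      Ψ (a • u + b • v) ≤ (a : EReal) * Ψ u + (b : EReal) * Ψ v) :
    ConvexOn ℝ (effectiveDomain Ψ) fun u => (Ψ u).toReal := by
  have hle {u v : E} (hu : u ∈ effectiveDomain Ψ) (hv : v ∈ effectiveDomain Ψ) {a b : ℝ}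
      (ha : 0 ≤ a) (hb : 0 ≤ b) (hab : a + b = 1) :
      Ψ (a • u + b • v) ≤ ((a * (Ψ u).toReal + b * (Ψ v).toReal : ℝ) : EReal) := by
    push_cast
    rw [coe_toReal_of_mem_effectiveDomain hbot hu, coe_toReal_of_mem_effectiveDomain hbot hv]
    exact hconv u v a b ha hb hab
  refine ⟨fun u hu v hv a b ha hb hab => ?_, fun u hu v hv a b ha hb hab => ?_⟩
  · exact ((hle hu hv ha hb hab).trans_lt (EReal.coe_lt_top _)).ne
  · exact (EReal.toReal_le_toReal (hle hu hv ha hb hab) (hbot _) (EReal.coe_ne_top _)).trans_eq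
      (EReal.toReal_coe _)

end ExtendedReal

theorem fast_fista_values_little_o_general
    {H : Type*} [NormedAddCommGroup H] [InnerProductSpace ℝ H]
    (Ψ : H → EReal) (Φ : H → ℝ) (Φ' : H → H) (K : ℝ≥0) (s α : ℝ)
    (hΨ_ne_bot : ∀ u, Ψ u ≠ ⊥) (hΨ_proper : ∃ u, Ψ u ≠ ⊤)
    (hΨ_convex : ∀ u v : H, ∀ a b : ℝ, 0 ≤ a → 0 ≤ b → a + b = 1 →
      Ψ (a • u + b • v) ≤ (a : EReal) * Ψ u + (b : EReal) * Ψ v)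
    (hΦ_convex : ConvexOn ℝ Set.univ Φ)
    (hΦ_diff : ∀ u, HasFDerivAt Φ (innerSL ℝ (Φ' u)) u)
    (hΦ_lip : LipschitzWith K Φ')
    (hα : 3 < α) (hs : 0 < s) (hsK : s * K ≤ 1)
    (x y : ℕ → H)
    (hy : ∀ k : ℕ, 1 ≤ k →
      y k = x k + (((k : ℝ) - 1) / ((k : ℝ) + α - 1)) • (x k - x (k - 1)))
    (hx : ∀ k : ℕ, 1 ≤ k → ∀ u : H,
      Ψ (x (k + 1)) + ((1 / (2 * s) * ‖x (k + 1) - (y k - s • Φ' (y k))‖ ^ 2 : ℝ) : EReal)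
        ≤ Ψ u + ((1 / (2 * s) * ‖u - (y k - s • Φ' (y k))‖ ^ 2 : ℝ) : EReal))
    (xstar : H)
    (hxstar : ∀ u, Ψ xstar + (Φ xstar : EReal) ≤ Ψ u + (Φ u : EReal)) :
    Tendsto
      (fun k : ℕ => (((k : ℝ) ^ 2 : ℝ) : EReal) *
        ((Ψ (x k) + (Φ (x k) : EReal)) - (Ψ xstar + (Φ xstar : EReal))))
      atTop (𝓝 0) := by
  let proxTerm (k : ℕ) (u : H) : ℝ := 1 / (2 * s) * ‖u - (y k - s • Φ' (y k))‖ ^ 2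
  have hmem (k : ℕ) (hk : 1 ≤ k) : x (k + 1) ∈ effectiveDomain Ψ :=
    mem_effectiveDomain_of_le (φ := proxTerm k) hΨ_proper (hx k hk)
  have hmem_star : xstar ∈ effectiveDomain Ψ := mem_effectiveDomain_of_le hΨ_proper hxstar
  have hlim := tendsto_sq_mul_gap_of_forwardBackward (convexOn_toReal hΨ_ne_bot hΨ_convex)
    hΦ_convex hΦ_diff hΦ_lip hα hs hsK hy hmem
    (fun k hk => isMinOn_toReal_add (φ := proxTerm k) hΨ_ne_bot hΨ_proper (hx k hk))
    hmem_star (isMinOn_toReal_add hΨ_ne_bot hΨ_proper hxstar)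
  refine ((continuous_coe_real_ereal.tendsto 0).comp hlim).congr' ?_
  filter_upwards [eventually_ge_atTop 2] with k hk
  obtain ⟨j, rfl⟩ := Nat.exists_eq_add_of_le' hk
  rw [← coe_toReal_of_mem_effectiveDomain hΨ_ne_bot hmem_star,
    ← coe_toReal_of_mem_effectiveDomain hΨ_ne_bot (hmem (j + 1) le_add_self)]
  norm_cast

/-- Theorem 1 (function values): `(Ψ+Φ)(x_k) - min(Ψ+Φ) = o(k⁻²)`. -/
theorem fast_fista_values_little_o
    {H : Type*} [NormedAddCommGroup H] [InnerProductSpace ℝ H] [CompleteSpace H]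
    (Ψ : H → EReal) (Φ : H → ℝ) (Φ' : H → H) (L s α : ℝ)
    (hΨ_ne_bot : ∀ u, Ψ u ≠ ⊥) (hΨ_proper : ∃ u, Ψ u ≠ ⊤)
    (hΨ_lsc : LowerSemicontinuous Ψ)
    (hΨ_convex : ∀ u v : H, ∀ a b : ℝ, 0 ≤ a → 0 ≤ b → a + b = 1 →
      Ψ (a • u + b • v) ≤ (a : EReal) * Ψ u + (b : EReal) * Ψ v)
    (hΦ_convex : ConvexOn ℝ Set.univ Φ)
    (hΦ_diff : ∀ u, HasGradientAt Φ (Φ' u) u)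
    (hΦ_lip : LipschitzWith (Real.toNNReal L) Φ')
    (hα : 3 < α) (hs : 0 < s) (hsL : s < 1 / L)
    (x y : ℕ → H)
    (hy : ∀ k : ℕ, 1 ≤ k →
      y k = x k + (((k : ℝ) - 1) / ((k : ℝ) + α - 1)) • (x k - x (k - 1)))
    (hx : ∀ k : ℕ, 1 ≤ k → ∀ u : H,
      Ψ (x (k + 1)) + ((1 / (2 * s) * ‖x (k + 1) - (y k - s • Φ' (y k))‖ ^ 2 : ℝ) : EReal)
        ≤ Ψ u + ((1 / (2 * s) * ‖u - (y k - s • Φ' (y k))‖ ^ 2 : ℝ) : EReal))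
    (xstar : H)
    (hxstar : ∀ u, Ψ xstar + (Φ xstar : EReal) ≤ Ψ u + (Φ u : EReal)) :
    Tendsto
      (fun k : ℕ => (((k : ℝ) ^ 2 : ℝ) : EReal) * ((Ψ (x k) + (Φ (x k) : EReal)) - (Ψ xstar + (Φ xstar : EReal))))
      atTop (nhds 0) := by
  have hL : 0 < L := one_div_pos.1 (hs.trans hsL)
  exact fast_fista_values_little_o_general Ψ Φ Φ' L.toNNReal s α hΨ_ne_bot hΨ_proper hΨ_convex
    hΦ_convex (fun u => (hΦ_diff u).hasFDerivAt) hΦ_lip hα hs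
    (by rw [Real.coe_toNNReal L hL.le]; exact ((lt_div_iff₀ hL).1 hsL).le) x y hy hx xstar hxstar
end

section
/- Let H be a real Hilbert space, Ψ : H → ℝ ∪ {+∞} proper, lower-semicontinuous and convex, and Φ : H → ℝ convex and continuously differentiable with L-Lipschitz continuous gradient. Suppose S = argmin(Ψ + Φ) is nonempty, and let (x_k) be generated by the accelerated forward-backward algorithm with parameter α > 3 and step size 0 < s < 1/L. Then the velocities satisfy lim_{k→∞} k ‖x_{k+1} − x_k‖ = 0; i.e. ‖x_{k+1} − x_k‖ = o(k^{-1}). -/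
/-!
Let `w k = 2 s (Θ (x k) - min Θ)`. Comparing the proximal gradient step from `y k` with the point
`x k` and with a minimizer `z` yields two descent inequalities for `w`. A convex combination of the
two makes the Lyapunov energy `(k + α - 2)² w k + ‖(α - 1) (x k - z) + (k - 1) (x k - x (k - 1))‖²`
drop by at least `(α - 3) k w k`, so `∑ k w k < ∞`. The first one alone says that the mechanical
energy `F k = (k - 1)² ‖x k - x (k - 1)‖² + (k + α - 2)² w k` increases by at most `O(k w k)` while
dissipating `2 (α - 1) k ‖x (k + 1) - x k‖²`. Hence `F` converges and `∑ k ‖x (k + 1) - x k‖² < ∞`,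
so that `∑ F k / k < ∞`; as the harmonic series diverges, the limit of `F` is zero.
-/

open Filter RealInnerProductSpace

open Asymptotics Topology
open scoped NNReal

section RealSequences

lemma exists_tendsto_and_summable_of_succ_add_le {a b ε : ℕ → ℝ} (ha : ∀ n, 0 ≤ a n)
    (hb : ∀ n, 0 ≤ b n) (hε : Summable ε) (h : ∀ n, a (n + 1) + b n ≤ a n + ε n) :
    (∃ l, Tendsto a atTop (𝓝 l)) ∧ Summable b := by
  -- Subtracting the accumulated errors turns `a` into a decreasing sequence.
  set c : ℕ → ℝ := fun n => a n - ∑ i ∈ Finset.range n, ε i with hc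
  have hc_succ (n : ℕ) : c (n + 1) + b n ≤ c n := by
    simp only [hc, Finset.sum_range_succ]
    linarith [h n]
  have hc_anti : Antitone c := antitone_nat_of_succ_le fun n => by linarith [hc_succ n, hb n]
  obtain ⟨M, hM⟩ := hε.hasSum.tendsto_sum_nat.bddAbove_range
  have hc_ge (n : ℕ) : -M ≤ c n := by linarith [ha n, hM (Set.mem_range_self n)]
  have hc_lim := tendsto_atTop_ciInf hc_anti ⟨-M, Set.forall_mem_range.2 hc_ge⟩
  refine ⟨⟨_, (hc_lim.add hε.hasSum.tendsto_sum_nat).congr fun n => sub_add_cancel _ _⟩, ?_⟩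
  refine summable_of_sum_range_le (c := c 0 + M) hb fun n => ?_
  calc ∑ i ∈ Finset.range n, b i ≤ ∑ i ∈ Finset.range n, (c i - c (i + 1)) :=
        Finset.sum_le_sum fun i _ => by linarith [hc_succ i]
    _ = c 0 - c n := Finset.sum_range_sub' c n
    _ ≤ c 0 + M := by linarith [hc_ge n]

lemma eq_zero_of_tendsto_of_summable_div {a : ℕ → ℝ} {l : ℝ} (ha : Tendsto a atTop (𝓝 l))
    (h : Summable fun n : ℕ => a n / (n + 1)) : l = 0 := by
  by_contra hl
  have hla : (fun _ => l) =O[atTop] a := ((isEquivalent_const_iff_tendsto hl).2 ha).isBigO_symm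
  have hla_div : (fun n : ℕ => l * ((n : ℝ) + 1)⁻¹) =O[atTop] fun n => a n / (n + 1) :=
    hla.mul (isBigO_refl _ _)
  have harmonic : Summable fun n : ℕ => ((n : ℝ) + 1)⁻¹ :=
    (summable_mul_left_iff hl).1 (summable_of_isBigO_nat h hla_div)
  exact Real.not_summable_natCast_inv ((summable_nat_add_iff 1).1 (mod_cast harmonic))

end RealSequences

section Convex

variable {H : Type*} [NormedAddCommGroup H] [InnerProductSpace ℝ H]

lemma norm_smul_add_smul_sq (a b : ℝ) (u v : H) :
    ‖a • u + b • v‖ ^ 2 = (a + b) * (a * ‖u‖ ^ 2 + b * ‖v‖ ^ 2) - a * b * ‖u - v‖ ^ 2 := by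
  rw [norm_add_sq_real, norm_sub_sq_real, norm_smul, norm_smul, mul_pow, mul_pow,
    Real.norm_eq_abs, Real.norm_eq_abs, sq_abs, sq_abs, real_inner_smul_left,
    real_inner_smul_right]
  ring

lemma hasDerivAt_comp_lineMap_of_hasGradientAt [CompleteSpace H] {f : H → ℝ} {g : H} {a b : H}
    {t : ℝ} (hf : HasGradientAt f g (AffineMap.lineMap a b t)) :
    HasDerivAt (f ∘ AffineMap.lineMap a b) ⟪g, b - a⟫ t :=
  hf.hasFDerivAt.comp_hasDerivAt t AffineMap.hasDerivAt_lineMap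

lemma add_inner_sub_le_of_convexOn [CompleteSpace H] {D : Set H} {f : H → ℝ} {g a b : H}
    (hf : ConvexOn ℝ D f) (ha : a ∈ D) (hb : b ∈ D) (hg : HasGradientAt f g a) :
    f a + ⟪g, b - a⟫ ≤ f b := by
  have hderiv : HasDerivAt (f ∘ AffineMap.lineMap a b) ⟪g, b - a⟫ (0 : ℝ) :=
    hasDerivAt_comp_lineMap_of_hasGradientAt (by rwa [AffineMap.lineMap_apply_zero])
  have hslope := (hf.comp_affineMap (AffineMap.lineMap a b)).le_slope_of_hasDerivAt
    (x := 0) (y := 1) (by simpa using ha) (by simpa using hb) zero_lt_one hderiv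
  simp only [slope_def_field, Function.comp_apply, AffineMap.lineMap_apply_one,
    AffineMap.lineMap_apply_zero, sub_zero, div_one] at hslope
  linarith

lemma le_add_inner_add_norm_sq_of_lipschitzWith_gradient [CompleteSpace H] {f : H → ℝ} {f' : H → H}
    {L : ℝ≥0} (hf : ∀ u, HasGradientAt f (f' u) u) (hL : LipschitzWith L f') (a b : H) :
    f b ≤ f a + ⟪f' a, b - a⟫ + L / 2 * ‖b - a‖ ^ 2 := by
  have hline (t : ℝ) := hasDerivAt_comp_lineMap_of_hasGradientAt (hf (AffineMap.lineMap a b t))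
  have hparabola (t : ℝ) : HasDerivAt
      (fun t => f a + t * ⟪f' a, b - a⟫ + t ^ 2 * (L / 2 * ‖b - a‖ ^ 2))
      (⟪f' a, b - a⟫ + t * (L * ‖b - a‖ ^ 2)) t := by
    refine ((((hasDerivAt_id t).mul_const _).const_add _).add
      ((hasDerivAt_pow 2 t).mul_const _)).congr_deriv ?_
    push_cast
    ring
  have hslope (t : ℝ) (ht : 0 ≤ t) : ⟪f' (AffineMap.lineMap a b t), b - a⟫ ≤
      ⟪f' a, b - a⟫ + t * (L * ‖b - a‖ ^ 2) := by
    rw [← sub_le_iff_le_add', ← inner_sub_left]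
    calc ⟪f' (AffineMap.lineMap a b t) - f' a, b - a⟫
        ≤ ‖f' (AffineMap.lineMap a b t) - f' a‖ * ‖b - a‖ := real_inner_le_norm _ _
      _ ≤ L * ‖AffineMap.lineMap a b t - a‖ * ‖b - a‖ := by
        gcongr
        exact hL.norm_sub_le _ _
      _ = t * (L * ‖b - a‖ ^ 2) := by
        rw [← dist_eq_norm, dist_lineMap_left, Real.norm_of_nonneg ht, dist_eq_norm']
        ring
  have hcompare := image_le_of_deriv_right_le_deriv_boundary (a := 0) (b := 1)
    (fun t _ => (hline t).continuousAt.continuousWithinAt)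
    (fun t _ => (hline t).hasDerivWithinAt) (by simp)
    (fun t _ => (hparabola t).continuousAt.continuousWithinAt)
    (fun t _ => (hparabola t).hasDerivWithinAt) (fun t ht => hslope t ht.1)
    (Set.right_mem_Icc.2 zero_le_one)
  simpa using hcompare

/-- `p` is the value at `v` of the proximal map of `s ψ`, where `ψ` is understood to be `+∞`
outside of its effective domain `D`. -/
def IsProx (D : Set H) (ψ : H → ℝ) (s : ℝ) (v p : H) : Prop :=
  p ∈ D ∧ IsMinOn (fun u => ψ u + 1 / (2 * s) * ‖u - v‖ ^ 2) D p

namespace IsProx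

variable {D : Set H} {ψ : H → ℝ} {s : ℝ}

lemma mul_sub_le_inner {v p u : H} (hp : IsProx D ψ s v p) (hψ : ConvexOn ℝ D ψ) (hs : 0 < s)
    (hu : u ∈ D) : s * (ψ p - ψ u) ≤ ⟪p - v, u - p⟫ := by
  have hsegment (t : ℝ) (ht : 0 < t) (ht1 : t ≤ 1) :
      s * (ψ p - ψ u) ≤ ⟪p - v, u - p⟫ + t * (‖u - p‖ ^ 2 / 2) := by
    have hconv := hψ.2 hp.1 hu (sub_nonneg.2 ht1) ht.le (sub_add_cancel 1 t)
    have hmin := isMinOn_iff.1 hp.2 _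
      (hψ.1 hp.1 hu (sub_nonneg.2 ht1) ht.le (sub_add_cancel 1 t))
    have hexpand : ‖(1 - t) • p + t • u - v‖ ^ 2 =
        ‖p - v‖ ^ 2 + 2 * (t * ⟪p - v, u - p⟫) + (t * ‖u - p‖) ^ 2 := by
      rw [show (1 - t) • p + t • u - v = (p - v) + t • (u - p) by module, norm_add_sq_real,
        norm_smul, real_inner_smul_right, Real.norm_of_nonneg ht.le]
    have hscaled : t * (ψ p - ψ u) ≤
        (2 * (t * ⟪p - v, u - p⟫) + (t * ‖u - p‖) ^ 2) / (2 * s) := by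
      simp only [smul_eq_mul, hexpand] at hconv hmin
      rw [div_eq_inv_mul, ← one_div]
      linarith
    rw [le_div_iff₀ (by positivity)] at hscaled
    refine le_of_mul_le_mul_left ?_ ht
    linarith
  have hlim : Tendsto (fun t : ℝ => ⟪p - v, u - p⟫ + t * (‖u - p‖ ^ 2 / 2)) (𝓝[>] 0)
      (𝓝 ⟪p - v, u - p⟫) :=
    Continuous.tendsto' (by fun_prop) 0 _ (by simp) |>.mono_left nhdsWithin_le_nhds
  refine ge_of_tendsto hlim ?_
  filter_upwards [Ioc_mem_nhdsGT zero_lt_one] with t ht using hsegment t ht.1 ht.2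

lemma objective_sub_le [CompleteSpace H] {Φ : H → ℝ} {Φ' : H → H} {L : ℝ≥0} {y p u : H}
    (hp : IsProx D ψ s (y - s • Φ' y) p) (hψ : ConvexOn ℝ D ψ) (hΦ : ConvexOn ℝ Set.univ Φ)
    (hΦ' : ∀ u, HasGradientAt Φ (Φ' u) u) (hL : LipschitzWith L Φ') (hs : 0 < s)
    (hsL : s * L ≤ 1) (hu : u ∈ D) :
    2 * s * (ψ p + Φ p - (ψ u + Φ u)) ≤ ‖y - u‖ ^ 2 - ‖p - u‖ ^ 2 := by
  have hprox : s * (ψ p - ψ u) ≤ ⟪p - y, u - p⟫ + s * ⟪Φ' y, u - p⟫ := by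
    have h := hp.mul_sub_le_inner hψ hs hu
    rwa [sub_sub_eq_add_sub, add_sub_right_comm, inner_add_left, real_inner_smul_left] at h
  have hsmooth : s * (Φ p - Φ u) ≤ s * ⟪Φ' y, p - u⟫ + ‖p - y‖ ^ 2 / 2 := by
    have hdescent := le_add_inner_add_norm_sq_of_lipschitzWith_gradient hΦ' hL y p
    have hconvex := add_inner_sub_le_of_convexOn hΦ trivial (Set.mem_univ u) (hΦ' y)
    have hstep : s * L * ‖p - y‖ ^ 2 ≤ 1 * ‖p - y‖ ^ 2 := by gcongr
    have hsplit : ⟪Φ' y, p - y⟫ - ⟪Φ' y, u - y⟫ = ⟪Φ' y, p - u⟫ := by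
      rw [← inner_sub_right, sub_sub_sub_cancel_right]
    have hdiff : Φ p - Φ u ≤ ⟪Φ' y, p - u⟫ + L / 2 * ‖p - y‖ ^ 2 := by linarith
    linarith [mul_le_mul_of_nonneg_left hdiff hs.le]
  have hneg : ⟪Φ' y, u - p⟫ = -⟪Φ' y, p - u⟫ := by rw [← inner_neg_right, neg_sub]
  have hthree_points : ‖y - u‖ ^ 2 = ‖p - y‖ ^ 2 + 2 * ⟪p - y, u - p⟫ + ‖p - u‖ ^ 2 := by
    rw [norm_sub_rev p u, ← norm_add_sq_real, add_comm, sub_add_sub_cancel, norm_sub_rev]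
  rw [hneg] at hprox
  linarith

end IsProx

end Convex

section Lyapunov

variable {H : Type*} [NormedAddCommGroup H] [InnerProductSpace ℝ H]

/-- The Lyapunov energy of an inertial sequence `x` with gaps `w`, relative to the minimizer `z`.
Here `x n` and `w n` stand for `x_{n+1}` and `2 s (Θ(x_{n+2}) - min Θ)` in the paper's
indexing. -/
def lyapunovEnergy (α : ℝ) (x : ℕ → H) (w : ℕ → ℝ) (z : H) (n : ℕ) : ℝ :=
  (n + α) ^ 2 * w n + ‖(α - 1) • (x (n + 1) - z) + ((n : ℝ) + 1) • (x (n + 1) - x n)‖ ^ 2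

/-- The rescaled mechanical energy (kinetic plus potential) of an inertial sequence `x` with
gaps `w`, indexed as in `lyapunovEnergy`. -/
def mechanicalEnergy (α : ℝ) (x : ℕ → H) (w : ℕ → ℝ) (n : ℕ) : ℝ :=
  (n + 1) ^ 2 * ‖x (n + 1) - x n‖ ^ 2 + (n + α) ^ 2 * w n

/-- A sequence `x` with extrapolated points `y`, whose gaps `w` satisfy the two inequalities that a
proximal gradient step from `y n` to `x (n + 2)` gives when compared with `x (n + 1)` and with the
minimizer `z`. -/
structure IsInertialDescent (α : ℝ) (x y : ℕ → H) (w : ℕ → ℝ) (z : H) : Prop where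
  smul_extrapolation (n : ℕ) :
    ((n : ℝ) + 1 + α) • (y n - x (n + 1)) = ((n : ℝ) + 1) • (x (n + 1) - x n)
  gap_nonneg (n : ℕ) : 0 ≤ w n
  gap_succ_le (n : ℕ) : w (n + 1) ≤ w n + ‖y n - x (n + 1)‖ ^ 2 - ‖x (n + 2) - x (n + 1)‖ ^ 2
  gap_succ_le_minimizer (n : ℕ) : w (n + 1) ≤ ‖y n - z‖ ^ 2 - ‖x (n + 2) - z‖ ^ 2

namespace IsInertialDescent

variable {α : ℝ} {x y : ℕ → H} {w : ℕ → ℝ} {z : H}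

lemma lyapunovEnergy_nonneg (h : IsInertialDescent α x y w z) (n : ℕ) :
    0 ≤ lyapunovEnergy α x w z n := by
  have := h.gap_nonneg n
  unfold lyapunovEnergy
  positivity

lemma mechanicalEnergy_nonneg (h : IsInertialDescent α x y w z) (n : ℕ) :
    0 ≤ mechanicalEnergy α x w n := by
  have := h.gap_nonneg n
  unfold mechanicalEnergy
  positivity

lemma lyapunovEnergy_succ_add_le (h : IsInertialDescent α x y w z) (hα : 1 ≤ α) (n : ℕ) :
    lyapunovEnergy α x w z (n + 1) + (α - 3) * ((n + 2) * w n) ≤ lyapunovEnergy α x w z n := by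
  have hmomentum : (α - 1) • (x (n + 1) - z) + ((n : ℝ) + 1) • (x (n + 1) - x n) =
      ((n : ℝ) + 2) • (y n - x (n + 1)) + (α - 1) • (y n - z) := by
    rw [← h.smul_extrapolation n]
    module
  have hmomentum_succ : (α - 1) • (x (n + 2) - z) +
      (((n + 1 : ℕ) : ℝ) + 1) • (x (n + 2) - x (n + 1)) =
        ((n : ℝ) + 2) • (x (n + 2) - x (n + 1)) + (α - 1) • (x (n + 2) - z) := by
    push_cast
    module
  have hiterate := mul_le_mul_of_nonneg_left (h.gap_succ_le n)
    (by positivity : 0 ≤ ((n : ℝ) + 2) * (n + 1 + α))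
  have hminimizer := mul_le_mul_of_nonneg_left (h.gap_succ_le_minimizer n)
    (mul_nonneg (sub_nonneg.2 hα) (by positivity : 0 ≤ (n : ℝ) + 1 + α))
  have hw : 0 ≤ (α - 2) ^ 2 * w n := mul_nonneg (sq_nonneg _) (h.gap_nonneg n)
  unfold lyapunovEnergy
  rw [hmomentum, hmomentum_succ, norm_smul_add_smul_sq, norm_smul_add_smul_sq,
    sub_sub_sub_cancel_left, sub_sub_sub_cancel_left]
  push_cast
  linarith

lemma mechanicalEnergy_succ_add_le (h : IsInertialDescent α x y w z) (hα : 1 ≤ α) (n : ℕ) :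
    mechanicalEnergy α x w (n + 1) + 2 * (α - 1) * ((n + 2) * ‖x (n + 2) - x (n + 1)‖ ^ 2) ≤
      mechanicalEnergy α x w n + 2 * α * ((n + 2) * w n) := by
  have hextrapolation : ((n : ℝ) + 1 + α) ^ 2 * ‖y n - x (n + 1)‖ ^ 2 =
      (n + 1) ^ 2 * ‖x (n + 1) - x n‖ ^ 2 := by
    have hnorm := congrArg norm (h.smul_extrapolation n)
    rw [norm_smul_of_nonneg (by positivity), norm_smul_of_nonneg (by positivity)] at hnorm
    rw [← mul_pow, hnorm, mul_pow]
  have hiterate := mul_le_mul_of_nonneg_left (h.gap_succ_le n) (sq_nonneg ((n : ℝ) + 1 + α))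
  have hvelocity : 0 ≤ (α - 1) ^ 2 * ‖x (n + 2) - x (n + 1)‖ ^ 2 := by positivity
  have hgap : ((n : ℝ) + 1 + α) ^ 2 * w n ≤ (n + α) ^ 2 * w n + 2 * α * ((n + 2) * w n) := by
    rw [← mul_assoc, ← add_mul]
    refine mul_le_mul_of_nonneg_right ?_ (h.gap_nonneg n)
    nlinarith [mul_nonneg (sub_nonneg.2 hα) (Nat.cast_nonneg (α := ℝ) n)]
  unfold mechanicalEnergy
  push_cast
  linarith

lemma summable_mul_gap (h : IsInertialDescent α x y w z) (hα : 3 < α) :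
    Summable fun n : ℕ => (n + 2) * w n := by
  have hα' : 0 < α - 3 := sub_pos.2 hα
  have hdissipation : Summable fun n : ℕ => (α - 3) * ((n + 2) * w n) :=
    (exists_tendsto_and_summable_of_succ_add_le h.lyapunovEnergy_nonneg
      (fun n => mul_nonneg hα'.le (mul_nonneg (by positivity) (h.gap_nonneg n))) summable_zero
      fun n => by simpa using h.lyapunovEnergy_succ_add_le (by linarith) n).2
  exact (summable_mul_left_iff hα'.ne').1 hdissipation

lemma exists_tendsto_mechanicalEnergy_and_summable_velocity (h : IsInertialDescent α x y w z)
    (hα : 3 < α) : (∃ l, Tendsto (mechanicalEnergy α x w) atTop (𝓝 l)) ∧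
      Summable fun n : ℕ => (n + 1) * ‖x (n + 1) - x n‖ ^ 2 := by
  have hα' : 0 < 2 * (α - 1) := by linarith
  obtain ⟨hlim, hsum⟩ := exists_tendsto_and_summable_of_succ_add_le h.mechanicalEnergy_nonneg
    (fun n => by positivity) ((h.summable_mul_gap hα).mul_left (2 * α))
    (h.mechanicalEnergy_succ_add_le (by linarith))
  refine ⟨hlim, (summable_nat_add_iff 1).1 (((summable_mul_left_iff hα'.ne').1 hsum).congr ?_)⟩
  intro n
  push_cast
  ring

lemma summable_mechanicalEnergy_div (h : IsInertialDescent α x y w z) (hα : 3 < α) :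
    Summable fun n : ℕ => mechanicalEnergy α x w n / (n + 1) := by
  refine .of_nonneg_of_le (fun n => div_nonneg (h.mechanicalEnergy_nonneg n) (by positivity)) ?_
    ((h.exists_tendsto_mechanicalEnergy_and_summable_velocity hα).2.add
      ((h.summable_mul_gap hα).mul_left (α ^ 2)))
  intro n
  have hw := h.gap_nonneg n
  have hshift : (n : ℝ) + α ≤ α * (n + 1) := by
    nlinarith [mul_nonneg (by linarith : 0 ≤ α - 1) (Nat.cast_nonneg (α := ℝ) n)]
  have hpotential : (n + α) ^ 2 * w n ≤ α ^ 2 * ((n + 2) * w n) * (n + 1) :=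
    calc (n + α) ^ 2 * w n ≤ (α * (n + 1)) ^ 2 * w n := by gcongr
      _ = α ^ 2 * ((n + 1) * w n) * (n + 1) := by ring
      _ ≤ α ^ 2 * ((n + 2) * w n) * (n + 1) := by gcongr; norm_num
  rw [div_le_iff₀ (by positivity), mechanicalEnergy]
  linarith

lemma tendsto_mechanicalEnergy (h : IsInertialDescent α x y w z) (hα : 3 < α) :
    Tendsto (mechanicalEnergy α x w) atTop (𝓝 0) := by
  obtain ⟨l, hl⟩ := (h.exists_tendsto_mechanicalEnergy_and_summable_velocity hα).1
  rwa [eq_zero_of_tendsto_of_summable_div hl (h.summable_mechanicalEnergy_div hα)] at hl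

lemma tendsto_mul_norm_velocity (h : IsInertialDescent α x y w z) (hα : 3 < α) :
    Tendsto (fun n : ℕ => (n + 1) * ‖x (n + 1) - x n‖) atTop (𝓝 0) := by
  refine squeeze_zero (fun n => by positivity) (fun n => Real.le_sqrt_of_sq_le ?_)
    (by simpa using (h.tendsto_mechanicalEnergy hα).sqrt)
  rw [mul_pow, mechanicalEnergy]
  exact le_add_of_nonneg_right (mul_nonneg (sq_nonneg _) (h.gap_nonneg n))

end IsInertialDescent

end Lyapunov

section FastForwardBackward

variable {H : Type*} [NormedAddCommGroup H] [InnerProductSpace ℝ H]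

/-- The accelerated forward-backward iteration for `ψ + Φ`, where `ψ` has effective domain `D` and
`Φ'` is the gradient of `Φ`. To avoid subtracting indices, `x n` and `y n` stand for `x_{n+1}` and
`y_{n+2}` in the paper's indexing, so `mem_one` is about `x_2`, the first value of the proximal
map, and `x 0` may lie outside of `D`. -/
structure IsFastForwardBackward (D : Set H) (ψ : H → ℝ) (Φ' : H → H) (s α : ℝ) (x y : ℕ → H) :
    Prop where
  mem_one : x 1 ∈ D
  extrapolation (n : ℕ) : y n = x (n + 1) + (((n : ℝ) + 1) / (n + 1 + α)) • (x (n + 1) - x n)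
  isProx (n : ℕ) : IsProx D ψ s (y n - s • Φ' (y n)) (x (n + 2))

namespace IsFastForwardBackward

variable {D : Set H} {ψ : H → ℝ} {Φ' : H → H} {s α : ℝ} {x y : ℕ → H}

lemma mem_succ (h : IsFastForwardBackward D ψ Φ' s α x y) : ∀ n, x (n + 1) ∈ D
  | 0 => h.mem_one
  | n + 1 => (h.isProx n).1

lemma isInertialDescent [CompleteSpace H] {Φ : H → ℝ} {L : ℝ≥0} {z : H}
    (h : IsFastForwardBackward D ψ Φ' s α x y) (hψ : ConvexOn ℝ D ψ)
    (hΦ : ConvexOn ℝ Set.univ Φ) (hΦ' : ∀ u, HasGradientAt Φ (Φ' u) u) (hL : LipschitzWith L Φ')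
    (hα : 0 ≤ α) (hs : 0 < s) (hsL : s * L ≤ 1) (hz : z ∈ D)
    (hmin : IsMinOn (fun u => ψ u + Φ u) D z) :
    IsInertialDescent α x y
      (fun n => 2 * s * (ψ (x (n + 1)) + Φ (x (n + 1)) - (ψ z + Φ z))) z where
  smul_extrapolation n := by
    rw [h.extrapolation n, add_sub_cancel_left, smul_smul, mul_div_cancel₀ _ (by positivity)]
  gap_nonneg n := mul_nonneg (by positivity)
    (sub_nonneg.2 (isMinOn_iff.1 hmin _ (h.mem_succ n)))
  gap_succ_le n := by
    linarith [(h.isProx n).objective_sub_le hψ hΦ hΦ' hL hs hsL (h.mem_succ n)]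
  gap_succ_le_minimizer n := (h.isProx n).objective_sub_le hψ hΦ hΦ' hL hs hsL hz

end IsFastForwardBackward

end FastForwardBackward

section ExtendedReal

variable {H : Type*}

lemma convexOn_toReal_of_convex [AddCommGroup H] [Module ℝ H] {Ψ : H → EReal}
    (hbot : ∀ u, Ψ u ≠ ⊥)
    (hconv : ∀ u v : H, ∀ a b : ℝ, 0 ≤ a → 0 ≤ b → a + b = 1 →
      Ψ (a • u + b • v) ≤ (a : EReal) * Ψ u + (b : EReal) * Ψ v) :
    ConvexOn ℝ {u | Ψ u ≠ ⊤} fun u => (Ψ u).toReal := by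
  have hcoe {u v : H} (hu : Ψ u ≠ ⊤) (hv : Ψ v ≠ ⊤) {a b : ℝ} (ha : 0 ≤ a) (hb : 0 ≤ b)
      (hab : a + b = 1) :
      Ψ (a • u + b • v) ≤ ((a * (Ψ u).toReal + b * (Ψ v).toReal : ℝ) : EReal) := by
    simpa [EReal.coe_toReal hu (hbot u), EReal.coe_toReal hv (hbot v)] using
      hconv u v a b ha hb hab
  refine ⟨fun u hu v hv a b ha hb hab =>
    ne_top_of_le_ne_top (EReal.coe_ne_top _) (hcoe hu hv ha hb hab),
    fun u hu v hv a b ha hb hab => ?_⟩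
  exact (EReal.toReal_le_toReal (hcoe hu hv ha hb hab) (hbot _) (EReal.coe_ne_top _)).trans_eq
    (EReal.toReal_coe _)

lemma ne_top_and_isMinOn_toReal_add {Ψ : H → EReal} {g : H → ℝ} {p : H}
    (hbot : ∀ u, Ψ u ≠ ⊥) (hproper : ∃ u, Ψ u ≠ ⊤)
    (hp : ∀ u, Ψ p + (g p : EReal) ≤ Ψ u + (g u : EReal)) :
    p ∈ {u | Ψ u ≠ ⊤} ∧ IsMinOn (fun u => (Ψ u).toReal + g u) {u | Ψ u ≠ ⊤} p := by
  have hcoe {u : H} (hu : Ψ u ≠ ⊤) :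
      Ψ p + (g p : EReal) ≤ (((Ψ u).toReal + g u : ℝ) : EReal) := by
    simpa [EReal.coe_toReal hu (hbot u)] using hp u
  obtain ⟨u₀, hu₀⟩ := hproper
  have hptop : Ψ p ≠ ⊤ := fun h => by
    have hle := hcoe hu₀
    rw [h, EReal.top_add_coe, top_le_iff] at hle
    exact EReal.coe_ne_top _ hle
  refine ⟨hptop, isMinOn_iff.2 fun u hu => ?_⟩
  have hle := hcoe hu
  rw [← EReal.coe_toReal hptop (hbot p)] at hle
  exact_mod_cast hle

end ExtendedReal

theorem fast_fista_velocities_little_o_general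
    {H : Type*} [NormedAddCommGroup H] [InnerProductSpace ℝ H] [CompleteSpace H]
    {Ψ : H → EReal} {Φ : H → ℝ} {Φ' : H → H} {L : ℝ≥0} {s α : ℝ}
    (hΨ_ne_bot : ∀ u, Ψ u ≠ ⊥) (hΨ_proper : ∃ u, Ψ u ≠ ⊤)
    (hΨ_convex : ∀ u v : H, ∀ a b : ℝ, 0 ≤ a → 0 ≤ b → a + b = 1 →
      Ψ (a • u + b • v) ≤ (a : EReal) * Ψ u + (b : EReal) * Ψ v)
    (hΦ_convex : ConvexOn ℝ Set.univ Φ)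
    (hΦ_diff : ∀ u, HasGradientAt Φ (Φ' u) u)
    (hΦ_lip : LipschitzWith L Φ')
    (hα : 3 < α) (hs : 0 < s) (hsL : s * L ≤ 1)
    {x y : ℕ → H}
    (hy : ∀ k : ℕ, 1 ≤ k →
      y k = x k + (((k : ℝ) - 1) / ((k : ℝ) + α - 1)) • (x k - x (k - 1)))
    (hx : ∀ k : ℕ, 1 ≤ k → ∀ u : H,
      Ψ (x (k + 1)) + ((1 / (2 * s) * ‖x (k + 1) - (y k - s • Φ' (y k))‖ ^ 2 : ℝ) : EReal)
        ≤ Ψ u + ((1 / (2 * s) * ‖u - (y k - s • Φ' (y k))‖ ^ 2 : ℝ) : EReal))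
    {xstar : H}
    (hxstar : ∀ u, Ψ xstar + (Φ xstar : EReal) ≤ Ψ u + (Φ u : EReal)) :
    Tendsto (fun k : ℕ => (k : ℝ) * ‖x (k + 1) - x k‖) atTop (𝓝 0) := by
  have hprox (k : ℕ) (hk : 1 ≤ k) : IsProx {u | Ψ u ≠ ⊤} (fun u => (Ψ u).toReal) s
      (y k - s • Φ' (y k)) (x (k + 1)) :=
    ne_top_and_isMinOn_toReal_add hΨ_ne_bot hΨ_proper (hx k hk)
  obtain ⟨hz, hmin⟩ := ne_top_and_isMinOn_toReal_add hΨ_ne_bot hΨ_proper hxstar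
  have hiter : IsFastForwardBackward {u | Ψ u ≠ ⊤} (fun u => (Ψ u).toReal) Φ' s α
      (fun n => x (n + 1)) (fun n => y (n + 2)) :=
    { mem_one := (hprox 1 le_rfl).1
      extrapolation := fun n => by
        rw [hy (n + 2) (by omega)]
        push_cast
        ring_nf
      isProx := fun n => hprox (n + 2) (by omega) }
  have hdescent := hiter.isInertialDescent (convexOn_toReal_of_convex hΨ_ne_bot hΨ_convex)
    hΦ_convex hΦ_diff hΦ_lip (by linarith) hs hsL hz hmin
  rw [← tendsto_add_atTop_iff_nat 1]
  exact mod_cast hdescent.tendsto_mul_norm_velocity hα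

/-- Theorem 1 (velocities): `‖x_{k+1} - x_k‖ = o(k⁻¹)`. -/
theorem fast_fista_velocities_little_o
    {H : Type*} [NormedAddCommGroup H] [InnerProductSpace ℝ H] [CompleteSpace H]
    (Ψ : H → EReal) (Φ : H → ℝ) (Φ' : H → H) (L s α : ℝ)
    (hΨ_ne_bot : ∀ u, Ψ u ≠ ⊥) (hΨ_proper : ∃ u, Ψ u ≠ ⊤)
    (hΨ_lsc : LowerSemicontinuous Ψ)
    (hΨ_convex : ∀ u v : H, ∀ a b : ℝ, 0 ≤ a → 0 ≤ b → a + b = 1 →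
      Ψ (a • u + b • v) ≤ (a : EReal) * Ψ u + (b : EReal) * Ψ v)
    (hΦ_convex : ConvexOn ℝ Set.univ Φ)
    (hΦ_diff : ∀ u, HasGradientAt Φ (Φ' u) u)
    (hΦ_lip : LipschitzWith (Real.toNNReal L) Φ')
    (hα : 3 < α) (hs : 0 < s) (hsL : s < 1 / L)
    (x y : ℕ → H)
    (hy : ∀ k : ℕ, 1 ≤ k →
      y k = x k + (((k : ℝ) - 1) / ((k : ℝ) + α - 1)) • (x k - x (k - 1)))
    (hx : ∀ k : ℕ, 1 ≤ k → ∀ u : H,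
      Ψ (x (k + 1)) + ((1 / (2 * s) * ‖x (k + 1) - (y k - s • Φ' (y k))‖ ^ 2 : ℝ) : EReal)
        ≤ Ψ u + ((1 / (2 * s) * ‖u - (y k - s • Φ' (y k))‖ ^ 2 : ℝ) : EReal))
    (xstar : H)
    (hxstar : ∀ u, Ψ xstar + (Φ xstar : EReal) ≤ Ψ u + (Φ u : EReal)) :
    Tendsto (fun k : ℕ => (k : ℝ) * ‖x (k + 1) - x k‖) atTop (nhds 0) := by
  have hL : 0 < L := one_div_pos.1 (hs.trans hsL)
  exact fast_fista_velocities_little_o_general hΨ_ne_bot hΨ_proper hΨ_convex hΦ_convex hΦ_diff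
    hΦ_lip hα hs (by simpa only [Real.coe_toNNReal L hL.le] using ((lt_div_iff₀ hL).1 hsL).le)
    hy hx hxstar
end
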